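/- arXiv:2209.04058 — 3 statements merged into one kernel-verified Lean document; each statement's English description precedes it below -/
import Mathlib

section
/- Consider the mechanism SimpleScaledGreedy run on an instance p and a predicted instance p̂, with a predicted schedule x̂ satisfying MS(p̂, x̂) ≤ α·OPT(p̂) for some α ≥ 1. If p̂ = p, then for every machine i, the sum over all jobs j ∈ M_i \ M̂_i of p(i,j) is at most α·OPT(p). -/
open scoped Classical
noncomputable section
variable {n m : ℕ}

/-- The makespan of allocation `a` under instance `p`. -/
def MS [NeZero n] (p : Fin n → Fin m → ℝ) (a : Fin m → Fin n) : ℝ :=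
  Finset.univ.sup' Finset.univ_nonempty fun i => ∑ j, if a j = i then p i j else 0

/-- The optimal makespan of instance `p`. -/
def OPT [NeZero n] (p : Fin n → Fin m → ℝ) : ℝ :=
  Finset.univ.inf' Finset.univ_nonempty fun a : Fin m → Fin n => MS p a

/-- The scalars used by `SimpleScaledGreedy`. -/
def ssgR (phat : Fin n → Fin m → ℝ) (xhat : Fin m → Fin n) (i : Fin n) (j : Fin m) : ℝ :=
  max 1 (min (phat (xhat j) j / phat i j) (n : ℝ))

lemma exists_argmin [NeZero n] (v : Fin n → ℝ) :
    (Finset.univ.filter fun i => ∀ i', v i ≤ v i').Nonempty := by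
  obtain ⟨i, -, hi⟩ := Finset.exists_min_image Finset.univ v Finset.univ_nonempty
  exact ⟨i, by
    simp only [Finset.mem_filter, Finset.mem_univ, true_and]
    exact fun i' => hi i' (Finset.mem_univ i')⟩

/-- The allocation computed by `SimpleScaledGreedy`: job `j` goes to a machine minimizing
`r(i,j)·p(i,j)`, with ties broken in favor of the predicted machine `x̂ j` and otherwise
in favor of the smallest-index machine. -/
def ssgAssign [NeZero n] (p phat : Fin n → Fin m → ℝ) (xhat : Fin m → Fin n) (j : Fin m) :
    Fin n :=
  let v : Fin n → ℝ := fun i => ssgR phat xhat i j * p i j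
  if ∀ i, v (xhat j) ≤ v i then xhat j
  else (Finset.univ.filter fun i => ∀ i', v i ≤ v i').min' (exists_argmin v)

/-!
The predicted machine of a job has scalar `1`, so a job that leaves it goes to a machine `i` with
`r(i,j)·p(i,j) < p(î_j,j)`. With `p̂ = p` this rules out `r(i,j) ≥ p(î_j,j)/p(i,j)`, so the cap `n`
must be active, and the job is more than `n` times faster on `i` than on `î_j`. Hence the jobs that
move to `i` take at most `1/n` of the total load of `x̂`, that is, the average machine load, which is
at most the makespan of `x̂`.
-/

section Makespan

/-- The load of machine `i` under allocation `a`, i.e. the quantity maximized by `MS`. -/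
def machineLoad (p : Fin n → Fin m → ℝ) (a : Fin m → Fin n) (i : Fin n) : ℝ :=
  ∑ j, if a j = i then p i j else 0

lemma sum_machineLoad (p : Fin n → Fin m → ℝ) (a : Fin m → Fin n) :
    ∑ i, machineLoad p a i = ∑ j, p (a j) j := by
  simp only [machineLoad]
  rw [Finset.sum_comm]
  simp

variable [NeZero n]

lemma machineLoad_le_MS (p : Fin n → Fin m → ℝ) (a : Fin m → Fin n) (i : Fin n) :
    machineLoad p a i ≤ MS p a :=
  Finset.le_sup' (machineLoad p a) (Finset.mem_univ i)

lemma sum_processingTime_le_mul_MS (p : Fin n → Fin m → ℝ) (a : Fin m → Fin n) :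
    ∑ j, p (a j) j ≤ n * MS p a := by
  calc ∑ j, p (a j) j = ∑ i, machineLoad p a i := (sum_machineLoad p a).symm
    _ ≤ ∑ _i : Fin n, MS p a := Finset.sum_le_sum fun i _ => machineLoad_le_MS p a i
    _ = n * MS p a := by simp

end Makespan

section ScaledGreedy

lemma ssgR_predicted (phat : Fin n → Fin m → ℝ) (xhat : Fin m → Fin n) (j : Fin m) :
    ssgR phat xhat (xhat j) j = 1 :=
  max_eq_left ((min_le_left _ _).trans (div_self_le_one _))

lemma min_le_ssgR_mul (phat : Fin n → Fin m → ℝ) (xhat : Fin m → Fin n) {i : Fin n} {j : Fin m}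
    (hpos : 0 < phat i j) :
    min (phat (xhat j) j) (n * phat i j) ≤ ssgR phat xhat i j * phat i j := by
  calc min (phat (xhat j) j) (n * phat i j)
      = min (phat (xhat j) j / phat i j) n * phat i j := by
        rw [min_mul_of_nonneg _ _ hpos.le, div_mul_cancel₀ _ hpos.ne']
    _ ≤ ssgR phat xhat i j * phat i j :=
        mul_le_mul_of_nonneg_right (le_max_right _ _) hpos.le

variable [NeZero n]

lemma ssgAssign_eq_predicted {p phat : Fin n → Fin m → ℝ} {xhat : Fin m → Fin n} {j : Fin m}
    (hmin : ∀ i, ssgR phat xhat (xhat j) j * p (xhat j) j ≤ ssgR phat xhat i j * p i j) :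
    ssgAssign p phat xhat j = xhat j :=
  if_pos hmin

lemma ssgR_mul_ssgAssign_le (p phat : Fin n → Fin m → ℝ) (xhat : Fin m → Fin n) (j : Fin m)
    (i : Fin n) :
    ssgR phat xhat (ssgAssign p phat xhat j) j * p (ssgAssign p phat xhat j) j
      ≤ ssgR phat xhat i j * p i j := by
  by_cases hmin : ∀ i, ssgR phat xhat (xhat j) j * p (xhat j) j ≤ ssgR phat xhat i j * p i j
  · rw [ssgAssign_eq_predicted hmin]
    exact hmin i
  · have hassign := Finset.min'_mem _ (exists_argmin fun i => ssgR phat xhat i j * p i j)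
    rw [show ssgAssign p phat xhat j = _ from if_neg hmin]
    exact (Finset.mem_filter.mp hassign).2 i

lemma ssgR_mul_ssgAssign_lt_of_ne {p phat : Fin n → Fin m → ℝ} {xhat : Fin m → Fin n} {j : Fin m}
    (hne : ssgAssign p phat xhat j ≠ xhat j) :
    ssgR phat xhat (ssgAssign p phat xhat j) j * p (ssgAssign p phat xhat j) j
      < p (xhat j) j := by
  contrapose! hne with hle
  refine ssgAssign_eq_predicted fun i => ?_
  rw [ssgR_predicted, one_mul]
  exact hle.trans (ssgR_mul_ssgAssign_le p phat xhat j i)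

lemma mul_ssgAssign_lt_of_ne {p : Fin n → Fin m → ℝ} {xhat : Fin m → Fin n} {j : Fin m}
    (hpos : 0 < p (ssgAssign p p xhat j) j) (hne : ssgAssign p p xhat j ≠ xhat j) :
    n * p (ssgAssign p p xhat j) j < p (xhat j) j := by
  have hmin : min (p (xhat j) j) (n * p (ssgAssign p p xhat j) j) < p (xhat j) j :=
    (min_le_ssgR_mul p xhat hpos).trans_lt (ssgR_mul_ssgAssign_lt_of_ne hne)
  exact (min_lt_iff.mp hmin).resolve_left (lt_irrefl _)

lemma mul_sum_moved_le_sum_predicted {p : Fin n → Fin m → ℝ} (hp : ∀ i j, 0 < p i j)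
    (xhat : Fin m → Fin n) (i : Fin n) :
    n * ∑ j with ssgAssign p p xhat j = i ∧ xhat j ≠ i, p i j ≤ ∑ j, p (xhat j) j := by
  rw [Finset.mul_sum]
  calc ∑ j with ssgAssign p p xhat j = i ∧ xhat j ≠ i, n * p i j
      ≤ ∑ j with ssgAssign p p xhat j = i ∧ xhat j ≠ i, p (xhat j) j := by
        refine Finset.sum_le_sum fun j hj => ?_
        obtain ⟨rfl, hne⟩ := (Finset.mem_filter.mp hj).2
        exact (mul_ssgAssign_lt_of_ne (hp _ j) hne.symm).le
    _ ≤ ∑ j, p (xhat j) j :=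
        Finset.sum_le_sum_of_subset_of_nonneg (Finset.filter_subset _ _)
          fun j _ _ => (hp (xhat j) j).le

theorem ssg_bound_difference_general {p : Fin n → Fin m → ℝ} (hp : ∀ i j, 0 < p i j)
    (xhat : Fin m → Fin n) (i : Fin n) :
    ∑ j with ssgAssign p p xhat j = i ∧ xhat j ≠ i, p i j ≤ MS p xhat := by
  have hn : (0 : ℝ) < n := Nat.cast_pos.mpr (NeZero.pos n)
  exact le_of_mul_le_mul_left
    ((mul_sum_moved_le_sum_predicted hp xhat i).trans (sum_processingTime_le_mul_MS p xhat)) hn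

end ScaledGreedy

/-- If `SimpleScaledGreedy` is run with an accurate prediction `p̂ = p` and a
predicted schedule `x̂` with `MS(p̂,x̂) ≤ α·OPT(p̂)`, then for every machine `i` the total
processing time of the jobs in `M_i \ M̂_i` is at most `α·OPT(p)`. -/
theorem ssg_bound_difference [NeZero n]
    (p phat : Fin n → Fin m → ℝ) (xhat : Fin m → Fin n) (α : ℝ)
    (hp : ∀ i j, 0 < p i j) (hphat : ∀ i j, 0 < phat i j)
    (hα : 1 ≤ α) (hMS : MS phat xhat ≤ α * OPT phat)
    (hpred : phat = p) (i : Fin n) :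
    ∑ j ∈ Finset.univ.filter (fun j => ssgAssign p phat xhat j = i ∧ xhat j ≠ i), p i j
      ≤ α * OPT p := by
  subst hpred
  exact (ssg_bound_difference_general hp xhat i).trans hMS
end
end

section
/- Consider the mechanism ScaledGreedy run with predicted schedule x̂ satisfying MS(p̂, x̂) ≤ α·OPT(p̂) for some α ≥ 1, and parameter γ ≥ 0. For every machine i, if the set J_i computed at termination equals M_i \ M̂_i, then Σ_{j ∈ M_i \ M̂_i} p̂(i,j) < (1+γ)·α·OPT(p̂). -/
open scoped Classical
noncomputable section
variable {n m : ℕ}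

/-- The state of the iterative loop of `ScaledGreedy`: the sets `J_i` and the scalars `r(i,j)`. -/
structure SGState (n m : ℕ) where
  J : Fin n → Finset (Fin m)
  r : Fin n → Fin m → ℝ

/-- The set `∪_i J_i` of jobs already put aside by the loop. -/
def sgAssigned (s : SGState n m) : Finset (Fin m) :=
  Finset.univ.filter fun j => ∃ i, j ∈ s.J i

/-- The set `I` of machines whose set `J_i` is not yet full. -/
def sgI [NeZero n] (phat : Fin n → Fin m → ℝ) (xhat : Fin m → Fin n) (γ : ℝ)
    (s : SGState n m) : Finset (Fin n) :=
  Finset.univ.filter fun i => ∑ j ∈ s.J i, phat i j < γ * MS phat xhat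

/-- The set `T` of candidate pairs `(i,j)`. -/
def sgT [NeZero n] (phat : Fin n → Fin m → ℝ) (xhat : Fin m → Fin n) (γ : ℝ)
    (s : SGState n m) : Finset (Fin n × Fin m) :=
  Finset.univ.filter fun q =>
    q.2 ∉ sgAssigned s ∧ q.1 ∈ sgI phat xhat γ s ∧
    phat q.1 q.2 < phat (xhat q.2) q.2 ∧
    ∀ i' ∈ sgI phat xhat γ s, phat i' q.2 < phat (xhat q.2) q.2 → phat q.1 q.2 ≤ phat i' q.2

/-- The initial state of `ScaledGreedy`: `J_i = ∅` and `r(i,j) = max(p̂(î_j,j)/p̂(i,j), 1)`. -/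
def sgInit (phat : Fin n → Fin m → ℝ) (xhat : Fin m → Fin n) : SGState n m :=
  ⟨fun _ => ∅, fun i j => max (phat (xhat j) j / phat i j) 1⟩

/-- One iteration of the while-loop of `ScaledGreedy`: a pair `(i*,j*) ∈ T` maximizing
`p̂(î_j,j)/p̂(i,j)` is selected, `j*` is added to `J_{i*}`, and `r(i,j*)` is set to `1` for
every machine `i` with `p̂(i*,j*) ≤ p̂(i,j*)`. -/
def SGStep [NeZero n] (phat : Fin n → Fin m → ℝ) (xhat : Fin m → Fin n) (γ : ℝ)
    (s s' : SGState n m) : Prop :=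
  ∃ q ∈ sgT phat xhat γ s,
    (∀ q' ∈ sgT phat xhat γ s,
      phat (xhat q'.2) q'.2 / phat q'.1 q'.2 ≤ phat (xhat q.2) q.2 / phat q.1 q.2) ∧
    s'.J = (fun i => if i = q.1 then insert q.2 (s.J i) else s.J i) ∧
    s'.r = fun i j => if j = q.2 ∧ phat q.1 q.2 ≤ phat i q.2 then 1 else s.r i j

/-- `s` is the state of `ScaledGreedy` at termination: it is reachable from the initial state
by iterations of the loop, and `T = ∅` so the loop has terminated. -/
def SGFinal [NeZero n] (phat : Fin n → Fin m → ℝ) (xhat : Fin m → Fin n) (γ : ℝ)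
    (s : SGState n m) : Prop :=
  Relation.ReflTransGen (SGStep phat xhat γ) (sgInit phat xhat) s ∧ sgT phat xhat γ s = ∅

/-- The allocation computed by `ScaledGreedy` from the terminal state `s`: each job `j` goes to
a machine minimizing `r(i,j)·p(i,j)`, with ties broken in favor of `î_j` first, then the machine
`i'` with `j ∈ J_{i'}` (if any), then the smallest-index machine. -/
def sgAssign [NeZero n] (s : SGState n m) (xhat : Fin m → Fin n)
    (p : Fin n → Fin m → ℝ) (j : Fin m) : Fin n :=
  let v : Fin n → ℝ := fun i => s.r i j * p i j
  if ∀ i, v (xhat j) ≤ v i then xhat j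
  else if h : ∃ i', j ∈ s.J i' ∧ ∀ i, v i' ≤ v i then Classical.choose h
  else (Finset.univ.filter fun i => ∀ i', v i ≤ v i').min' (exists_argmin v)

/-- `max_j r(i,j)`, the largest scalar of machine `i`. -/
def maxScalar [NeZero m] (r : Fin n → Fin m → ℝ) (i : Fin n) : ℝ :=
  Finset.univ.sup' Finset.univ_nonempty fun j => r i j

/-!
The loop adds a job `j` to `J_i` only while the load of `J_i` is below `γ·MS(p̂, x̂)`, and only if
`p̂(i,j) < p̂(î_j,j)`. Since `j` is part of the load of `î_j` in `x̂`, the new job contributes less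
than `MS(p̂, x̂)`, so the load of `J_i` always stays below `(1+γ)·MS(p̂, x̂)`.
-/

lemma sum_le_MS [NeZero n] (p : Fin n → Fin m → ℝ) (a : Fin m → Fin n) (i : Fin n) :
    ∑ j, (if a j = i then p i j else 0) ≤ MS p a :=
  Finset.le_sup' (fun i => ∑ j, if a j = i then p i j else 0) (Finset.mem_univ i)

lemma apply_le_MS [NeZero n] {p : Fin n → Fin m → ℝ} (hp : ∀ i j, 0 ≤ p i j)
    (a : Fin m → Fin n) (j : Fin m) : p (a j) j ≤ MS p a :=
  calc p (a j) j = if a j = a j then p (a j) j else 0 := (if_pos rfl).symm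
    _ ≤ ∑ k, if a k = a j then p (a j) k else 0 :=
      Finset.single_le_sum (f := fun k => if a k = a j then p (a j) k else 0)
        (fun k _ => ite_nonneg (hp _ k) le_rfl) (Finset.mem_univ j)
    _ ≤ MS p a := sum_le_MS p a (a j)

lemma MS_pos [NeZero n] [NeZero m] {p : Fin n → Fin m → ℝ} (hp : ∀ i j, 0 < p i j)
    (a : Fin m → Fin n) : 0 < MS p a :=
  (hp (a 0) 0).trans_le (apply_le_MS (fun i j => (hp i j).le) a 0)

section ScaledGreedy

variable [NeZero n] {phat : Fin n → Fin m → ℝ} {xhat : Fin m → Fin n} {γ : ℝ}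
  {s s' : SGState n m}

lemma SGStep.J_eq_or_eq_insert (h : SGStep phat xhat γ s s') (i : Fin n) :
    s'.J i = s.J i ∨
      ∃ j ∉ s.J i, s'.J i = insert j (s.J i) ∧
        ∑ k ∈ s.J i, phat i k < γ * MS phat xhat ∧ phat i j < phat (xhat j) j := by
  obtain ⟨⟨i₀, j⟩, hmem, -, hJ, -⟩ := h
  simp only [sgT, sgAssigned, sgI, Finset.mem_filter, Finset.mem_univ, true_and] at hmem
  obtain ⟨hunassigned, hload, hfaster, -⟩ := hmem
  rw [hJ]
  rcases eq_or_ne i i₀ with rfl | hne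
  · exact .inr ⟨j, fun hj => hunassigned ⟨i, hj⟩, if_pos rfl, hload, hfaster⟩
  · exact .inl (if_neg hne)

lemma SGStep.sum_J_lt (hphat : ∀ i j, 0 ≤ phat i j) (h : SGStep phat xhat γ s s') {i : Fin n}
    (hs : ∑ j ∈ s.J i, phat i j < (1 + γ) * MS phat xhat) :
    ∑ j ∈ s'.J i, phat i j < (1 + γ) * MS phat xhat := by
  rcases h.J_eq_or_eq_insert i with hJ | ⟨j, hj, hJ, hload, hfaster⟩
  · rwa [hJ]
  · calc ∑ k ∈ s'.J i, phat i k = phat i j + ∑ k ∈ s.J i, phat i k := by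
          rw [hJ, Finset.sum_insert hj]
      _ < MS phat xhat + γ * MS phat xhat :=
          add_lt_add (hfaster.trans_le (apply_le_MS hphat xhat j)) hload
      _ = (1 + γ) * MS phat xhat := by ring

lemma sum_J_lt_of_reachable (hphat : ∀ i j, 0 ≤ phat i j) (hMS : 0 < MS phat xhat)
    (hγ : -1 < γ) (h : Relation.ReflTransGen (SGStep phat xhat γ) (sgInit phat xhat) s)
    (i : Fin n) : ∑ j ∈ s.J i, phat i j < (1 + γ) * MS phat xhat := by
  induction h with
  | refl => simpa only [sgInit, Finset.sum_empty] using mul_pos (by linarith) hMS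
  | tail _ hstep ih => exact hstep.sum_J_lt hphat ih

theorem sg_bound_difference_general [NeZero m] {α : ℝ} (hphat : ∀ i j, 0 < phat i j)
    (hMS : MS phat xhat ≤ α * OPT phat) (hγ : -1 < γ)
    (h : Relation.ReflTransGen (SGStep phat xhat γ) (sgInit phat xhat) s) (i : Fin n) :
    ∑ j ∈ s.J i, phat i j < (1 + γ) * α * OPT phat :=
  calc ∑ j ∈ s.J i, phat i j < (1 + γ) * MS phat xhat :=
        sum_J_lt_of_reachable (fun i j => (hphat i j).le) (MS_pos hphat xhat) hγ h i
    _ ≤ (1 + γ) * (α * OPT phat) := mul_le_mul_of_nonneg_left hMS (by linarith)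
    _ = (1 + γ) * α * OPT phat := (mul_assoc _ _ _).symm

end ScaledGreedy

/-- For every machine `i`, if the set `J_i` computed by `ScaledGreedy` at
termination equals `M_i \ M̂_i`, then `Σ_{j ∈ M_i \ M̂_i} p̂(i,j) < (1+γ)·α·OPT(p̂)`. -/
theorem sg_bound_difference [NeZero n] [NeZero m]
    (p phat : Fin n → Fin m → ℝ) (xhat : Fin m → Fin n) (γ α : ℝ) (s : SGState n m)
    (hp : ∀ i j, 0 < p i j) (hphat : ∀ i j, 0 < phat i j)
    (hα : 1 ≤ α) (hMS : MS phat xhat ≤ α * OPT phat) (hγ : 0 ≤ γ)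
    (hfinal : SGFinal phat xhat γ s) (i : Fin n)
    (hJ : s.J i = Finset.univ.filter (fun j => sgAssign s xhat p j = i ∧ xhat j ≠ i)) :
    ∑ j ∈ Finset.univ.filter (fun j => sgAssign s xhat p j = i ∧ xhat j ≠ i), phat i j
      < (1 + γ) * α * OPT phat := by
  rw [← hJ]
  exact sg_bound_difference_general hphat hMS (by linarith) hfinal.1 i
end
end

section
/- Consider the mechanism ScaledGreedy with parameter γ > 0, and let r and the sets J_i denote the scalars and sets when ScaledGreedy terminates. For any machine i, if there exists a job j with r(i,j) > 1, then Σ_{j' ∈ J_i} p̂(i,j') ≥ γ·MS(p̂, x̂). -/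
open scoped Classical
noncomputable section
variable {n m : ℕ}

/-!
A scalar `r(i,j) > 1` certifies that `p̂(i,j) < p̂(î_j,j)`, so machine `i` competes for job `j`
for as long as `i ∈ I`. If `j` is never put aside, then termination (`T = ∅`) forces `i ∉ I`. If `j`
is put aside on `i*`, then `r(i,j)` survives that iteration only if `p̂(i,j) < p̂(i*,j)`; since `i*`
minimizes `p̂(·,j)` over the competing machines of `I`, machine `i` has already left `I`, and a
machine never returns to `I`.
-/

section ScaledGreedy

variable {phat : Fin n → Fin m → ℝ} {xhat : Fin m → Fin n} {γ : ℝ} {s s' : SGState n m}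
  {i : Fin n} {j : Fin m}

theorem mem_sgAssigned : j ∈ sgAssigned s ↔ ∃ i, j ∈ s.J i := by
  simp only [sgAssigned, Finset.mem_filter_univ]

theorem notMem_sgAssigned_sgInit : j ∉ sgAssigned (sgInit phat xhat) := by
  simp [mem_sgAssigned, sgInit]

theorem one_lt_r_sgInit_iff (hpos : 0 < phat i j) :
    1 < (sgInit phat xhat).r i j ↔ phat i j < phat (xhat j) j := by
  simp only [sgInit, lt_max_iff, lt_irrefl, or_false, one_lt_div hpos]

variable [NeZero n]

theorem notMem_sgI_iff : i ∉ sgI phat xhat γ s ↔ γ * MS phat xhat ≤ ∑ j ∈ s.J i, phat i j := by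
  simp only [sgI, Finset.mem_filter_univ, not_lt]

theorem mem_sgT {q : Fin n × Fin m} :
    q ∈ sgT phat xhat γ s ↔ q.2 ∉ sgAssigned s ∧ q.1 ∈ sgI phat xhat γ s ∧
      phat q.1 q.2 < phat (xhat q.2) q.2 ∧
      ∀ i' ∈ sgI phat xhat γ s, phat i' q.2 < phat (xhat q.2) q.2 →
        phat q.1 q.2 ≤ phat i' q.2 := by
  simp only [sgT, Finset.mem_filter_univ]

theorem exists_mem_sgT (hj : j ∉ sgAssigned s) (hi : i ∈ sgI phat xhat γ s)
    (hlt : phat i j < phat (xhat j) j) : ∃ k, (k, j) ∈ sgT phat xhat γ s := by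
  obtain ⟨k, hk, hmin⟩ := Finset.exists_min_image
    {i' ∈ sgI phat xhat γ s | phat i' j < phat (xhat j) j} (phat · j)
    ⟨i, Finset.mem_filter.2 ⟨hi, hlt⟩⟩
  obtain ⟨hkI, hklt⟩ := Finset.mem_filter.1 hk
  exact ⟨k, mem_sgT.2 ⟨hj, hkI, hklt, fun i' hi' hlt' =>
    hmin i' (Finset.mem_filter.2 ⟨hi', hlt'⟩)⟩⟩

namespace SGStep

theorem J_subset (hstep : SGStep phat xhat γ s s') (i : Fin n) : s.J i ⊆ s'.J i := by
  obtain ⟨q, -, -, hJ, -⟩ := hstep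
  simp only [hJ]
  split_ifs
  exacts [Finset.subset_insert _ _, Finset.Subset.rfl]

theorem notMem_sgI (hstep : SGStep phat xhat γ s s') (hnonneg : ∀ j, 0 ≤ phat i j)
    (hi : i ∉ sgI phat xhat γ s) : i ∉ sgI phat xhat γ s' := by
  rw [notMem_sgI_iff] at hi ⊢
  exact hi.trans <| Finset.sum_le_sum_of_subset_of_nonneg (hstep.J_subset i)
    fun j _ _ => hnonneg j

theorem one_lt_r (hstep : SGStep phat xhat γ s s') (hr : 1 < s'.r i j) : 1 < s.r i j := by
  obtain ⟨q, -, -, -, hr'⟩ := hstep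
  simp only [hr'] at hr
  split_ifs at hr
  exacts [absurd hr (lt_irrefl 1), hr]

theorem notMem_sgI_of_newly_assigned (hstep : SGStep phat xhat γ s s')
    (hj : j ∉ sgAssigned s) (hj' : j ∈ sgAssigned s') (hr : 1 < s'.r i j)
    (hlt : phat i j < phat (xhat j) j) : i ∉ sgI phat xhat γ s := by
  obtain ⟨q, hq, -, hJ, hr'⟩ := hstep
  obtain rfl : j = q.2 := by
    obtain ⟨k, hk⟩ := mem_sgAssigned.1 hj'
    have hk_notMem : j ∉ s.J k := fun hmem => hj (mem_sgAssigned.2 ⟨k, hmem⟩)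
    simp only [hJ] at hk
    split_ifs at hk
    exacts [(Finset.mem_insert.1 hk).resolve_right hk_notMem, absurd hk hk_notMem]
  have hbeats : ¬ phat q.1 q.2 ≤ phat i q.2 := by
    intro hle
    simp [hr', hle] at hr
  exact fun hi => hbeats ((mem_sgT.1 hq).2.2.2 i hi hlt)

end SGStep

theorem phat_lt_of_one_lt_r
    (hreach : Relation.ReflTransGen (SGStep phat xhat γ) (sgInit phat xhat) s)
    (hpos : 0 < phat i j) (hr : 1 < s.r i j) : phat i j < phat (xhat j) j := by
  induction hreach with
  | refl => exact (one_lt_r_sgInit_iff hpos).1 hr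
  | tail _ hstep ih => exact ih (hstep.one_lt_r hr)

theorem notMem_sgI_of_mem_sgAssigned
    (hreach : Relation.ReflTransGen (SGStep phat xhat γ) (sgInit phat xhat) s)
    (hpos : ∀ j, 0 < phat i j) (hr : 1 < s.r i j) (hj : j ∈ sgAssigned s) :
    i ∉ sgI phat xhat γ s := by
  induction hreach with
  | refl => exact absurd hj notMem_sgAssigned_sgInit
  | @tail t t' hreach hstep ih =>
    have hr_prev : 1 < t.r i j := hstep.one_lt_r hr
    refine hstep.notMem_sgI (fun j => (hpos j).le) ?_
    by_cases hj_prev : j ∈ sgAssigned t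
    · exact ih hr_prev hj_prev
    · exact hstep.notMem_sgI_of_newly_assigned hj_prev hj hr
        (phat_lt_of_one_lt_r hreach (hpos j) hr_prev)

theorem notMem_sgI_of_sgT_eq_empty (hT : sgT phat xhat γ s = ∅) (hj : j ∉ sgAssigned s)
    (hlt : phat i j < phat (xhat j) j) : i ∉ sgI phat xhat γ s := by
  intro hi
  obtain ⟨k, hk⟩ := exists_mem_sgT hj hi hlt
  exact Finset.notMem_empty _ (hT ▸ hk)

end ScaledGreedy

/-- At termination of `ScaledGreedy`, for any machine `i`, if some job `j`
has `r(i,j) > 1`, then `Σ_{j' ∈ J_i} p̂(i,j') ≥ γ·MS(p̂,x̂)`. -/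
theorem sg_Ji_full [NeZero n]
    (phat : Fin n → Fin m → ℝ) (xhat : Fin m → Fin n) (γ : ℝ) (s : SGState n m)
    (hphat : ∀ i j, 0 < phat i j) (hγ : 0 < γ)
    (hfinal : SGFinal phat xhat γ s) (i : Fin n) (h : ∃ j, 1 < s.r i j) :
    γ * MS phat xhat ≤ ∑ j' ∈ s.J i, phat i j' := by
  obtain ⟨hreach, hT⟩ := hfinal
  obtain ⟨j, hr⟩ := h
  rw [← notMem_sgI_iff]
  by_cases hj : j ∈ sgAssigned s
  · exact notMem_sgI_of_mem_sgAssigned hreach (hphat i) hr hj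
  · exact notMem_sgI_of_sgT_eq_empty hT hj (phat_lt_of_one_lt_r hreach (hphat i j) hr)
end
end
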